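/- Let ‖·‖ be a norm on ℝ^d with dual norm ‖g‖_* := sup_{‖x‖≤1} g·x, let K ⊆ ℝ^d be a convex set, and let R : ℝ^d → ℝ be differentiable and 1-strongly convex with respect to ‖·‖ (i.e. R(y) ≥ R(x) + ∇R(x)·(y−x) + ½‖y−x‖² for all x, y ∈ ℝ^d), attaining its global minimum at a point x₀ ∈ K and satisfying R(x) − R(x₀) ≤ D²/2 for all x ∈ K, where D > 0. Let Z₁, …, Z_n be an ℝ^d-valued square-integrable martingale difference sequence (E[Z_i | Z₁, …, Z_{i−1}] = 0, E‖Z_i‖_*² < ∞), and let X be any K-valued random vector, which may depend arbitrarily on Z₁, …, Z_n. Then E[ ( Σ_{i=1}^n Z_i ) · X ] ≤ D · √( Σ_{i=1}^n E‖Z_i‖_*² ). -/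

import Mathlib

open MeasureTheory

/-- The standard dot product on `ℝ^d`. -/
noncomputable def dot {d : ℕ} (g x : Fin d → ℝ) : ℝ := ∑ i, g i * x i

/-- The dual norm `‖g‖_* = sup_{‖x‖ ≤ 1} g·x` of a norm `nrm` on `ℝ^d`. -/
noncomputable def dualNorm {d : ℕ} (nrm : (Fin d → ℝ) → ℝ) (g : Fin d → ℝ) : ℝ :=
  sSup ((fun x => dot g x) '' {x | nrm x ≤ 1})

/-- The dot product as a continuous bilinear map. -/
noncomputable def dotB (d : ℕ) : (Fin d → ℝ) →L[ℝ] (Fin d → ℝ) →L[ℝ] ℝ :=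
  ∑ i, (ContinuousLinearMap.mul ℝ ℝ).bilinearComp
    (ContinuousLinearMap.proj i) (ContinuousLinearMap.proj i)

lemma dotB_apply {d : ℕ} (g x : Fin d → ℝ) : dotB d g x = dot g x := by
  simp [dotB, dot]

/-- A norm on `ℝ^d` is bounded below by a multiple of the sup norm. -/
lemma nrm_lower {d : ℕ} (nrm : (Fin d → ℝ) → ℝ)
    (hn0 : ∀ z, 0 ≤ nrm z) (hndef : ∀ z, nrm z = 0 ↔ z = 0)
    (hnsmul : ∀ (c : ℝ) z, nrm (c • z) = |c| * nrm z)
    (hntri : ∀ z w, nrm (z + w) ≤ nrm z + nrm w) :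
    ∃ c > 0, ∀ z, c * ‖z‖ ≤ nrm z := by
  let p : Seminorm ℝ (Fin d → ℝ) := Seminorm.of nrm hntri (by simpa using hnsmul)
  have hp : ∀ z, p z = nrm z := fun z => rfl
  have hcont : Continuous nrm := by
    have h := (p.convexOn.continuousOn isOpen_univ)
    exact continuousOn_univ.mp h
  by_cases hne : (Metric.sphere (0 : Fin d → ℝ) 1).Nonempty
  · obtain ⟨u, hu, hmin⟩ := (isCompact_sphere (0 : Fin d → ℝ) 1).exists_isMinOn hne
      hcont.continuousOn
    have hu1 : ‖u‖ = 1 := by simpa using hu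
    refine ⟨nrm u, lt_of_le_of_ne (hn0 u) ?_, ?_⟩
    · intro h
      have := (hndef u).1 h.symm
      simp [this] at hu1
    · intro z
      by_cases hz : z = 0
      · simp [hz, hn0]
      · have hz' : 0 < ‖z‖ := norm_pos_iff.2 hz
        have h1 : nrm u ≤ nrm (‖z‖⁻¹ • z) := hmin (by
          simp [norm_smul, hz'.ne'])
        rw [hnsmul, abs_of_pos (inv_pos.2 hz'), inv_mul_eq_div, le_div_iff₀ hz'] at h1
        exact h1
  · refine ⟨1, one_pos, fun z => ?_⟩
    by_cases hz : z = 0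
    · simp [hz, hn0]
    · have hz' : 0 < ‖z‖ := norm_pos_iff.2 hz
      exact absurd ⟨‖z‖⁻¹ • z, by simp [norm_smul, hz'.ne']⟩ hne

lemma dot_le_dualNorm {d : ℕ} (nrm : (Fin d → ℝ) → ℝ)
    (hn0 : ∀ z, 0 ≤ nrm z) (hndef : ∀ z, nrm z = 0 ↔ z = 0)
    (hnsmul : ∀ (c : ℝ) z, nrm (c • z) = |c| * nrm z)
    (c : ℝ) (hc : 0 < c) (hcn : ∀ z, c * ‖z‖ ≤ nrm z) (g u : Fin d → ℝ) :
    dot g u ≤ dualNorm nrm g * nrm u := by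
  have hbdd : BddAbove ((fun x => dot g x) '' {x | nrm x ≤ 1}) := by
    refine ⟨‖dotB d g‖ * (1 / c), ?_⟩
    rintro _ ⟨x, hx, rfl⟩
    have hx' : nrm x ≤ 1 := hx
    have h1 : ‖x‖ ≤ 1 / c := by
      rw [le_div_iff₀ hc]; linarith [hcn x]
    calc dot g x = dotB d g x := (dotB_apply g x).symm
      _ ≤ ‖dotB d g x‖ := le_abs_self _
      _ ≤ ‖dotB d g‖ * ‖x‖ := (dotB d g).le_opNorm x
      _ ≤ _ := by gcongr
  by_cases hu : u = 0
  · have : nrm u = 0 := (hndef u).2 hu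
    rw [this, hu]; simp [dot]
  · have hpos : 0 < nrm u := lt_of_le_of_ne (hn0 u) (fun h => hu ((hndef u).1 h.symm))
    have h1 : dot g ((nrm u)⁻¹ • u) ≤ dualNorm nrm g := by
      apply le_csSup hbdd
      refine ⟨_, ?_, rfl⟩
      simp [hnsmul, abs_of_pos hpos, hpos.ne']
    rw [← dotB_apply, map_smul, smul_eq_mul, inv_mul_eq_div, div_le_iff₀ hpos, dotB_apply] at h1
    exact h1

lemma norm_le_dualNorm {d : ℕ} (nrm : (Fin d → ℝ) → ℝ)
    (hn0 : ∀ z, 0 ≤ nrm z)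
    (hnsmul : ∀ (c : ℝ) z, nrm (c • z) = |c| * nrm z)
    (hdual : ∀ g u, dot g u ≤ dualNorm nrm g * nrm u) :
    ∃ C, 0 ≤ C ∧ ∀ g : Fin d → ℝ, ‖g‖ ^ 2 ≤ C * dualNorm nrm g ^ 2 := by
  set A := ∑ j, nrm (Pi.single j 1) with hA
  have hA0 : 0 ≤ A := Finset.sum_nonneg fun j _ => hn0 _
  refine ⟨A ^ 2, by positivity, fun g => ?_⟩
  have key : ‖g‖ ≤ |dualNorm nrm g| * A := by
    rw [pi_norm_le_iff_of_nonneg (by positivity)]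
    intro j
    have hj : nrm (Pi.single j 1) ≤ A :=
      Finset.single_le_sum (f := fun j => nrm (Pi.single j (1:ℝ))) (fun j _ => hn0 _)
        (Finset.mem_univ j)
    have hb : dualNorm nrm g * nrm (Pi.single j 1) ≤ |dualNorm nrm g| * A :=
      mul_le_mul (le_abs_self _) hj (hn0 _) (abs_nonneg _)
    have h1 := hdual g (Pi.single j 1)
    have h2 := hdual g (-Pi.single j 1)
    have h3 : nrm (-Pi.single j 1) = nrm (Pi.single j 1) := by
      have := hnsmul (-1) (Pi.single j 1)
      simpa using this
    have e1 : dot g (Pi.single j 1) = g j := by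
      simp [dot, Pi.single_apply]
    have e2 : dot g (-Pi.single j 1) = - g j := by
      rw [← dotB_apply, map_neg, dotB_apply, e1]
    rw [e1] at h1
    rw [e2, h3] at h2
    rw [Real.norm_eq_abs, abs_le]
    constructor <;> linarith
  calc ‖g‖ ^ 2 ≤ (|dualNorm nrm g| * A) ^ 2 := by gcongr
    _ = A ^ 2 * dualNorm nrm g ^ 2 := by rw [mul_pow, sq_abs]; ring

/-- The maximizer of `g·y - R y`: existence, gradient and Lipschitz continuity. -/
lemma exists_argmax {d : ℕ} (nrm : (Fin d → ℝ) → ℝ)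
    (c : ℝ) (hc : 0 < c) (hcn : ∀ z, c * ‖z‖ ≤ nrm z)
    (R : (Fin d → ℝ) → ℝ) (hRdiff : Differentiable ℝ R)
    (hRsc : ∀ x y : Fin d → ℝ,
      R x + fderiv ℝ R x (y - x) + (1 / 2) * (nrm (y - x)) ^ 2 ≤ R y)
    (x₀ : Fin d → ℝ) :
    ∃ xs : (Fin d → ℝ) → (Fin d → ℝ), (∃ C : NNReal, LipschitzWith C xs) ∧
      ∀ g y, R (xs g) + dot g (y - xs g) + (1 / 2) * (nrm (y - xs g)) ^ 2 ≤ R y := by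
  have hsq : ∀ z, c ^ 2 * ‖z‖ ^ 2 ≤ nrm z ^ 2 := fun z => by
    rw [← mul_pow]; exact pow_le_pow_left₀ (by positivity) (hcn z) 2
  have hex : ∀ g : Fin d → ℝ, ∃ x, ∀ y, R x - dotB d g x ≤ R y - dotB d g y := by
    intro g
    apply Continuous.exists_forall_le' (f := fun y => R y - dotB d g y)
      (hRdiff.continuous.sub (dotB d g).continuous) x₀
    set L := fderiv ℝ R x₀ - dotB d g with hL
    have hev := (tendsto_norm_cocompact_atTop (E := Fin d → ℝ)).eventually_ge_atTop
      (‖x₀‖ + 2 * ‖L‖ / c ^ 2)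
    filter_upwards [hev] with y hy
    have h1 := hRsc x₀ y
    have h2 := hsq (y - x₀)
    have h3 : |L (y - x₀)| ≤ ‖L‖ * ‖y - x₀‖ := L.le_opNorm _
    have h4 : 2 * ‖L‖ / c ^ 2 ≤ ‖y - x₀‖ := by linarith [norm_sub_norm_le y x₀]
    rw [div_le_iff₀ (by positivity)] at h4
    have h5 : L (y - x₀) = fderiv ℝ R x₀ (y - x₀) - (dotB d g y - dotB d g x₀) := by
      simp [hL]
    have h6 := neg_abs_le (L (y - x₀))
    nlinarith [norm_nonneg (y - x₀), mul_le_mul_of_nonneg_right h4 (norm_nonneg (y - x₀))]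
  choose xs hxs using hex
  have hgrad : ∀ g, fderiv ℝ R (xs g) = dotB d g := by
    intro g
    have hmin : IsLocalMin (fun y => R y - dotB d g y) (xs g) :=
      Filter.Eventually.of_forall (hxs g)
    have h := hmin.fderiv_eq_zero
    have h2 : fderiv ℝ (fun y => R y - dotB d g y) (xs g)
        = fderiv ℝ R (xs g) - dotB d g :=
      ((hRdiff (xs g)).hasFDerivAt.sub (dotB d g).hasFDerivAt).fderiv
    rw [h2] at h
    exact sub_eq_zero.1 h
  have hsc : ∀ g y, R (xs g) + dot g (y - xs g) + (1 / 2) * (nrm (y - xs g)) ^ 2 ≤ R y := by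
    intro g y
    have := hRsc (xs g) y
    rwa [hgrad, dotB_apply] at this
  refine ⟨xs, ⟨⟨‖dotB d‖ / c ^ 2, by positivity⟩, ?_⟩, hsc⟩
  apply LipschitzWith.of_dist_le_mul
  intro g g'
  rw [dist_eq_norm, dist_eq_norm]
  change _ ≤ ‖dotB d‖ / c ^ 2 * ‖g - g'‖
  have h1 := hsc g (xs g')
  have h2 := hsc g' (xs g)
  have h3 := hsq (xs g - xs g')
  have h4 := hsq (xs g' - xs g)
  rw [norm_sub_rev (xs g') (xs g)] at h4
  have h5 : dot g (xs g' - xs g) + dot g' (xs g - xs g')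
      = - dotB d (g - g') (xs g - xs g') := by
    simp only [← dotB_apply, map_sub, _root_.sub_apply]; ring
  have h6 : |dotB d (g - g') (xs g - xs g')| ≤ ‖dotB d‖ * ‖g - g'‖ * ‖xs g - xs g'‖ :=
    (dotB d).le_opNorm₂ _ _
  have h7 := le_abs_self (dotB d (g - g') (xs g - xs g'))
  rw [div_mul_eq_mul_div, le_div_iff₀ (by positivity)]
  by_cases h0 : ‖xs g - xs g'‖ = 0
  · rw [h0, zero_mul]; positivity
  · have h0' : 0 < ‖xs g - xs g'‖ := lt_of_le_of_ne (norm_nonneg _) (Ne.symm h0)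
    refine le_of_mul_le_mul_right ?_ h0'
    nlinarith

/-- Pull-out of the conditional expectation for the dot product. -/
lemma cross_term {d : ℕ} {Ω : Type*} {m mΩ : MeasurableSpace Ω} (hmle : m ≤ mΩ) (μ : Measure Ω)
    [IsProbabilityMeasure μ] (W f : Ω → Fin d → ℝ) (hW : MemLp W 2 μ) (hf : MemLp f 2 μ)
    (hfm : Measurable[m] f) (h0 : μ[W | m] =ᵐ[μ] 0) :
    Integrable (fun ω => dotB d (W ω) (f ω)) μ ∧ ∫ ω, dotB d (W ω) (f ω) ∂μ = 0 := by
  have hBint : Integrable (fun ω => dotB d (W ω) (f ω)) μ := by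
    have hp : Integrable (fun ω => ‖W ω‖ * ‖f ω‖) μ := hW.norm.integrable_mul hf.norm
    refine (hp.const_mul ‖dotB d‖).mono' ?_ (Filter.Eventually.of_forall fun ω => ?_)
    · exact (dotB d).aestronglyMeasurable_comp₂ hW.1 hf.1
    · have := (dotB d).le_opNorm₂ (W ω) (f ω)
      rwa [mul_assoc] at this
  refine ⟨hBint, ?_⟩
  have h1 := condExp_bilin_of_aestronglyMeasurable_right (m := m) (dotB d)
    hfm.stronglyMeasurable.aestronglyMeasurable hBint (hW.integrable one_le_two)
  rw [← integral_condExp hmle, integral_congr_ae h1]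
  rw [← integral_zero Ω ℝ (μ := μ)]
  apply integral_congr_ae
  filter_upwards [h0] with ω hω
  rw [hω]; simp

/-- Partial sums are measurable with respect to the generated sigma-algebra. -/
lemma partial_sum_measurable {d : ℕ} {Ω : Type*} (Z : ℕ → Ω → Fin d → ℝ) (l : ℝ) (k : ℕ) :
    Measurable[⨆ j ∈ Finset.Ico 1 (k + 1), MeasurableSpace.comap (Z j) inferInstance]
      (fun ω => l • ∑ i ∈ Finset.Icc 1 k, Z i ω) := by
  let m : MeasurableSpace Ω :=
    ⨆ j ∈ Finset.Ico 1 (k + 1), MeasurableSpace.comap (Z j) inferInstance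
  have : ∀ i ∈ Finset.Icc 1 k, Measurable[m] (Z i) := by
    intro i hi
    have hi' : i ∈ Finset.Ico 1 (k + 1) := by simp at hi ⊢; omega
    exact (comap_measurable (Z i)).mono
      (le_iSup₂ (f := fun j (_ : j ∈ Finset.Ico 1 (k + 1)) =>
        MeasurableSpace.comap (Z j) inferInstance) i hi') le_rfl
  exact (Finset.measurable_fun_sum _ this).const_smul l

/-- A Lipschitz function of a square-integrable vector is square-integrable. -/
lemma lip_memLp {d : ℕ} {Ω : Type*} [MeasurableSpace Ω] (μ : Measure Ω)
    [IsProbabilityMeasure μ] (xs : (Fin d → ℝ) → Fin d → ℝ) (C : NNReal)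
    (hLip : LipschitzWith C xs) (S : Ω → Fin d → ℝ) (hS : MemLp S 2 μ) :
    MemLp (fun ω => xs (S ω)) 2 μ := by
  have hg : MemLp (fun ω => ‖xs 0‖ + (C : ℝ) * ‖S ω‖) 2 μ :=
    (memLp_const (‖xs 0‖ : ℝ)).add (hS.norm.const_mul (C : ℝ))
  refine hg.mono' (hLip.continuous.comp_aestronglyMeasurable hS.1)
    (Filter.Eventually.of_forall fun ω => ?_)
  have h := hLip.dist_le_mul (S ω) 0
  rw [dist_eq_norm, dist_zero_right] at h
  have h2 := norm_sub_norm_le (xs (S ω)) (xs 0)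
  linarith

set_option maxHeartbeats 1000000

/-- Concentration for martingale difference sequences against an
arbitrary (possibly dependent) `K`-valued random vector:
`E[(Σᵢ Zᵢ)·X] ≤ D √(Σᵢ E‖Zᵢ‖_*²)`. -/
theorem martingale_dot_concentration {d : ℕ}
    (nrm : (Fin d → ℝ) → ℝ)
    (hn0 : ∀ z, 0 ≤ nrm z) (hndef : ∀ z, nrm z = 0 ↔ z = 0)
    (hnsmul : ∀ (c : ℝ) z, nrm (c • z) = |c| * nrm z)
    (hntri : ∀ z w, nrm (z + w) ≤ nrm z + nrm w)
    (K : Set (Fin d → ℝ)) (hKconv : Convex ℝ K)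
    (R : (Fin d → ℝ) → ℝ) (hRdiff : Differentiable ℝ R)
    (hRsc : ∀ x y : Fin d → ℝ,
      R x + fderiv ℝ R x (y - x) + (1 / 2) * (nrm (y - x)) ^ 2 ≤ R y)
    (x₀ : Fin d → ℝ) (hx₀K : x₀ ∈ K) (hx₀min : ∀ x : Fin d → ℝ, R x₀ ≤ R x)
    (D : ℝ) (hD : 0 < D) (hRD : ∀ x ∈ K, R x - R x₀ ≤ D ^ 2 / 2)
    {Ω : Type*} [MeasurableSpace Ω] (μ : Measure Ω) [IsProbabilityMeasure μ]
    (n : ℕ) (Z : ℕ → Ω → Fin d → ℝ)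
    (hZmeas : ∀ i ∈ Finset.Icc 1 n, Measurable (Z i))
    (hZL2 : ∀ i ∈ Finset.Icc 1 n, Integrable (fun ω => (dualNorm nrm (Z i ω)) ^ 2) μ)
    (hmds : ∀ i ∈ Finset.Icc 1 n,
      μ[Z i | ⨆ j ∈ Finset.Ico 1 i, MeasurableSpace.comap (Z j) inferInstance] =ᵐ[μ] 0)
    (X : Ω → Fin d → ℝ) (hXmeas : Measurable X) (hXK : ∀ ω, X ω ∈ K) :
    ∫ ω, dot (∑ i ∈ Finset.Icc 1 n, Z i ω) (X ω) ∂μ ≤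
      D * Real.sqrt (∑ i ∈ Finset.Icc 1 n, ∫ ω, (dualNorm nrm (Z i ω)) ^ 2 ∂μ) := by
  obtain ⟨c, hc, hcn⟩ := nrm_lower nrm hn0 hndef hnsmul hntri
  have hdual := dot_le_dualNorm nrm hn0 hndef hnsmul c hc hcn
  obtain ⟨A, hA0, hA⟩ := norm_le_dualNorm nrm hn0 hnsmul hdual
  obtain ⟨xs, ⟨C, hLip⟩, hxs⟩ := exists_argmax nrm c hc hcn R hRdiff hRsc x₀
  -- the conjugate function
  set Φ : (Fin d → ℝ) → ℝ := fun g => dotB d g (xs g) - R (xs g) with hΦ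
  have hΦcont : Continuous Φ := by
    have := hLip.continuous
    have h2 := hRdiff.continuous
    fun_prop
  have hYoung : ∀ g y, dotB d g y ≤ Φ g + R y := by
    intro g y
    have := hxs g y
    rw [← dotB_apply, map_sub] at this
    simp only [hΦ]
    nlinarith [sq_nonneg (nrm (y - xs g))]
  have hsmooth : ∀ (g z : Fin d → ℝ) (l : ℝ), 0 < l →
      Φ (g + l • z) ≤ Φ g + l * dotB d z (xs g) + l ^ 2 / 2 * dualNorm nrm z ^ 2 := by
    intro g z l hl
    have h1 := hxs g (xs (g + l • z))
    have h2 := hdual z (xs (g + l • z) - xs g)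
    simp only [hΦ]
    rw [← dotB_apply, map_sub] at h1 h2
    simp only [map_add, map_smul, _root_.add_apply, _root_.smul_apply,
      smul_eq_mul]
    have h3 := mul_le_mul_of_nonneg_left h2 hl.le
    nlinarith [sq_nonneg (l * dualNorm nrm z - nrm (xs (g + l • z) - xs g))]
  have hΦ0 : Φ 0 ≤ - R x₀ := by
    simp only [hΦ, map_zero, _root_.zero_apply]
    linarith [hx₀min (xs 0)]
  have hZmem : ∀ i ∈ Finset.Icc 1 n, MemLp (Z i) 2 μ := by
    intro i hi
    have hm := (hZmeas i hi).aestronglyMeasurable (μ := μ)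
    rw [memLp_two_iff_integrable_sq_norm hm]
    refine ((hZL2 i hi).const_mul A).mono' (hm.norm.pow 2) (Filter.Eventually.of_forall ?_)
    intro ω
    rw [Real.norm_of_nonneg (by positivity)]
    exact hA _
  -- the main induction
  have hind : ∀ l : ℝ, 0 < l → ∀ k ≤ n,
      Integrable (fun ω => Φ (l • ∑ i ∈ Finset.Icc 1 k, Z i ω)) μ ∧
      ∫ ω, Φ (l • ∑ i ∈ Finset.Icc 1 k, Z i ω) ∂μ ≤
        - R x₀ + l ^ 2 / 2 * ∑ i ∈ Finset.Icc 1 k, ∫ ω, (dualNorm nrm (Z i ω)) ^ 2 ∂μ := by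
    intro l hl k
    induction k with
    | zero =>
      intro _
      simpa using hΦ0
    | succ k ih =>
      intro hk
      obtain ⟨ihI, ihle⟩ := ih (by omega)
      have hk1 : k + 1 ∈ Finset.Icc 1 n := by simp; omega
      set S : Ω → Fin d → ℝ := fun ω => l • ∑ i ∈ Finset.Icc 1 k, Z i ω with hS
      have hSsucc : ∀ ω, l • ∑ i ∈ Finset.Icc 1 (k + 1), Z i ω = S ω + l • Z (k + 1) ω := by
        intro ω
        rw [Finset.sum_Icc_succ_top (by omega), smul_add]
      have hmle : (⨆ j ∈ Finset.Ico 1 (k + 1), MeasurableSpace.comap (Z j) inferInstance)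
          ≤ ‹MeasurableSpace Ω› := by
        refine iSup₂_le fun j hj => ?_
        refine (hZmeas j ?_).comap_le
        simp at hj ⊢; omega
      have hSm := partial_sum_measurable Z l k
      have hSmem : MemLp S 2 μ := by
        refine (memLp_finsetSum _ fun i hi => hZmem i ?_).const_smul l
        simp at hi ⊢; omega
      have hxSm := hLip.continuous.measurable.comp hSm
      have hxSmem := lip_memLp μ xs C hLip S hSmem
      obtain ⟨hBint, hB0⟩ := cross_term hmle μ (Z (k + 1)) (fun ω => xs (S ω)) (hZmem _ hk1)
        hxSmem hxSm (hmds (k + 1) hk1)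
      have hUint : Integrable (fun ω => Φ (S ω) + l * dotB d (Z (k + 1) ω) (xs (S ω))
          + l ^ 2 / 2 * dualNorm nrm (Z (k + 1) ω) ^ 2) μ :=
        (ihI.add (hBint.const_mul l)).add ((hZL2 _ hk1).const_mul _)
      have hpt : ∀ ω, Φ (S ω + l • Z (k + 1) ω) ≤ Φ (S ω) + l * dotB d (Z (k + 1) ω) (xs (S ω))
          + l ^ 2 / 2 * dualNorm nrm (Z (k + 1) ω) ^ 2 := fun ω => hsmooth _ _ _ hl
      have hNew : Integrable (fun ω => Φ (S ω + l • Z (k + 1) ω)) μ := by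
        refine integrable_of_le_of_le (g₁ := fun ω => dotB d (S ω + l • Z (k + 1) ω) x₀ - R x₀)
          ?_ (Filter.Eventually.of_forall fun ω => ?_) (Filter.Eventually.of_forall hpt) ?_ hUint
        · exact hΦcont.comp_aestronglyMeasurable
            (hSmem.1.add ((hZmem _ hk1).1.const_smul l))
        · have := hYoung (S ω + l • Z (k + 1) ω) x₀
          simp only
          linarith
        · have h1 : Integrable (fun ω => S ω + l • Z (k + 1) ω) μ :=
            (hSmem.integrable one_le_two).add (((hZmem _ hk1).integrable one_le_two).smul l)
          exact (((dotB d).flip x₀).integrable_comp h1).sub (integrable_const _)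
      simp_rw [hSsucc]
      refine ⟨hNew, ?_⟩
      have h1 := integral_mono hNew hUint hpt
      rw [integral_add (f := fun ω => Φ (S ω) + l * dotB d (Z (k + 1) ω) (xs (S ω)))
          (ihI.add (hBint.const_mul l)) ((hZL2 _ hk1).const_mul _),
        integral_add ihI (hBint.const_mul l), integral_const_mul, integral_const_mul, hB0] at h1
      rw [Finset.sum_Icc_succ_top (by omega)]
      linarith
  set V := ∑ i ∈ Finset.Icc 1 n, ∫ ω, (dualNorm nrm (Z i ω)) ^ 2 ∂μ with hV
  have hV0 : 0 ≤ V := Finset.sum_nonneg fun i _ => integral_nonneg fun ω => sq_nonneg _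
  by_cases hI : Integrable (fun ω => dot (∑ i ∈ Finset.Icc 1 n, Z i ω) (X ω)) μ
  swap
  · rw [integral_undef hI]; positivity
  set E := ∫ ω, dot (∑ i ∈ Finset.Icc 1 n, Z i ω) (X ω) ∂μ with hE
  have hmain : ∀ l : ℝ, 0 < l → l * E ≤ D ^ 2 / 2 + l ^ 2 / 2 * V := by
    intro l hl
    obtain ⟨h1, h2⟩ := hind l hl n le_rfl
    have h3 : ∫ ω, l * dot (∑ i ∈ Finset.Icc 1 n, Z i ω) (X ω) ∂μ ≤
        ∫ ω, (Φ (l • ∑ i ∈ Finset.Icc 1 n, Z i ω) + (R x₀ + D ^ 2 / 2)) ∂μ := by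
      refine integral_mono (hI.const_mul l) (h1.add (integrable_const _)) fun ω => ?_
      have h4 := hYoung (l • ∑ i ∈ Finset.Icc 1 n, Z i ω) (X ω)
      have h5 := hRD _ (hXK ω)
      rw [map_smul, _root_.smul_apply, smul_eq_mul, dotB_apply] at h4
      simp only
      linarith
    rw [integral_const_mul, integral_add h1 (integrable_const _)] at h3
    simp at h3
    linarith
  have hs := Real.sq_sqrt hV0
  rcases hV0.eq_or_lt with h0 | hpos
  · rw [← h0] at hmain ⊢
    simp only [Real.sqrt_zero, mul_zero, add_zero] at hmain ⊢
    by_contra hcon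
    push Not at hcon
    have := hmain (D ^ 2 / E) (by positivity)
    rw [div_mul_cancel₀ _ hcon.ne'] at this
    nlinarith [pow_pos hD 2]
  · have hsp := Real.sqrt_pos.2 hpos
    have := hmain (D / Real.sqrt V) (by positivity)
    have e : (D / Real.sqrt V) ^ 2 / 2 * V = D ^ 2 / 2 := by
      rw [div_pow, hs]; field_simp
    rw [e, div_mul_eq_mul_div, div_le_iff₀ hsp] at this
    have h6 : D * E ≤ D * (D * Real.sqrt V) := by linarith
    exact le_of_mul_le_mul_left h6 hD
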